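/- (Ando's dilation theorem) For any two commuting contractions A, B on a Hilbert space H, there exist a Hilbert space K containing H and commuting unitary operators U, V on K such that for all nonnegative integers m, n and all x, y ∈ H, ⟨AᵐBⁿx, y⟩ = ⟨UᵐVⁿx, y⟩. -/

import Mathlib

open scoped InnerProductSpace

universe u


section Prod
variable {E F : Type u} [NormedAddCommGroup E] [InnerProductSpace ℂ E]
  [NormedAddCommGroup F] [InnerProductSpace ℂ F]

lemma ando_prod_ext {E F : Type u} {v w : WithLp 2 (E × F)} (h1 : v.fst = w.fst) (h2 : v.snd = w.snd) : v = w :=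
  WithLp.ofLp_injective 2 (Prod.ext h1 h2)

lemma ando_prod_inner (v w : WithLp 2 (E × F)) :
    ⟪v, w⟫_ℂ = ⟪v.fst, w.fst⟫_ℂ + ⟪v.snd, w.snd⟫_ℂ := WithLp.prod_inner_apply v w

end Prod

section Defect
variable {H : Type u} [NormedAddCommGroup H] [InnerProductSpace ℂ H] [CompleteSpace H]

lemma ando_defect (A : H →L[ℂ] H) (hA : ‖A‖ ≤ 1) :
    ∃ D : H →L[ℂ] H, ∀ x, ‖D x‖ ^ 2 = ‖x‖ ^ 2 - ‖A x‖ ^ 2 := by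
  have key : ∀ (T : H →L[ℂ] H) (x : H), ⟪(star T * T) x, x⟫_ℂ = ((‖T x‖ ^ 2 : ℝ) : ℂ) := by
    intro T x
    rw [mul_apply_eq_comp, ContinuousLinearMap.star_eq_adjoint,
      ContinuousLinearMap.adjoint_inner_left, inner_self_eq_norm_sq_to_K]
    norm_num
  have h1 : ∀ x, ⟪(1 - star A * A) x, x⟫_ℂ = ((‖x‖ ^ 2 - ‖A x‖ ^ 2 : ℝ) : ℂ) := by
    intro x
    rw [sub_apply, inner_sub_left, key, one_apply_eq_self,
      inner_self_eq_norm_sq_to_K]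
    norm_num
  have hpos : (0 : H →L[ℂ] H) ≤ 1 - star A * A := by
    rw [ContinuousLinearMap.nonneg_iff_isPositive, ContinuousLinearMap.isPositive_iff_complex]
    intro x
    rw [h1]
    refine ⟨rfl, ?_⟩
    have : ‖A x‖ ≤ ‖x‖ := by
      simpa using A.le_of_opNorm_le hA x
    have h3 : ‖A x‖ ^ 2 ≤ ‖x‖ ^ 2 := by gcongr
    change (0 : ℝ) ≤ ‖x‖ ^ 2 - ‖A x‖ ^ 2
    linarith
  obtain ⟨D, hD⟩ := CStarAlgebra.nonneg_iff_eq_star_mul_self.1 hpos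
  refine ⟨D, fun x => ?_⟩
  have := h1 x
  rw [hD, key] at this
  exact_mod_cast this

end Defect

section Halmos
variable {H Z : Type u} [NormedAddCommGroup H] [InnerProductSpace ℂ H]
  [NormedAddCommGroup Z] [InnerProductSpace ℂ Z] [CompleteSpace Z]

lemma ando_partial (c c' : H →ₗ[ℂ] Z) (h : ∀ x, ‖c x‖ = ‖c' x‖) :
    ∃ p : Z →L[ℂ] Z, (∀ x, p (c x) = c' x) ∧ (∀ x, p.adjoint (p (c x)) = c x) ∧
      (∀ z, p (p.adjoint (p z)) = p z) := by
  let M : Submodule ℂ Z := (LinearMap.range c).topologicalClosure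
  have : CompleteSpace M := (LinearMap.range c).isClosed_topologicalClosure.completeSpace_coe
  have hcM : ∀ x, c x ∈ M := fun x => Submodule.le_topologicalClosure _ (LinearMap.mem_range_self c x)
  let e : H →ₗ[ℂ] M := c.codRestrict M hcM
  have hd : DenseRange e := by
    intro z
    rw [Metric.mem_closure_iff]
    intro ε hε
    have hz : (z : Z) ∈ closure (LinearMap.range c : Set Z) := z.2
    obtain ⟨b, ⟨x, rfl⟩, hb⟩ := Metric.mem_closure_iff.1 hz ε hε
    exact ⟨e x, ⟨x, rfl⟩, hb⟩
  have hn : ∀ x, ‖c' x‖ ≤ 1 * ‖e x‖ := fun x => by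
    rw [one_mul, ← h]
    exact le_rfl
  let φ : M →L[ℂ] Z := c'.extendOfNorm e
  have hφe : ∀ x, φ (e x) = c' x := LinearMap.extendOfNorm_eq hd ⟨1, hn⟩
  have hφn : ∀ z, ‖φ z‖ = ‖z‖ := by
    intro z
    refine hd.induction_on (p := fun z => ‖φ z‖ = ‖z‖) z
      (isClosed_eq φ.continuous.norm continuous_norm) fun x => ?_
    rw [hφe, ← h]
    rfl
  let ψ : M →ₗᵢ[ℂ] Z := ⟨φ.toLinearMap, hφn⟩
  have hφi : ∀ x y, ⟪φ x, φ y⟫_ℂ = ⟪x, y⟫_ℂ := fun x y => ψ.inner_map_map x y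
  let p : Z →L[ℂ] Z := φ ∘L M.orthogonalProjectionOnto
  have hpp : ∀ z, p.adjoint (p z) = M.orthogonalProjectionOnto z := by
    intro z
    refine ext_inner_right ℂ fun w => ?_
    rw [ContinuousLinearMap.adjoint_inner_left]
    change ⟪φ (M.orthogonalProjectionOnto z), φ (M.orthogonalProjectionOnto w)⟫_ℂ = _
    rw [hφi]
    simp
  have hproj : ∀ x, M.orthogonalProjectionOnto (c x) = e x := fun x =>
    Submodule.orthogonalProjectionOnto_mem_subspace_eq_self (e x)
  refine ⟨p, fun x => ?_, fun x => ?_, fun z => ?_⟩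
  · change φ (M.orthogonalProjectionOnto (c x)) = _
    rw [hproj, hφe]
  · rw [hpp, hproj]
    rfl
  · rw [hpp]
    change φ (M.orthogonalProjectionOnto (M.orthogonalProjectionOnto z : Z)) = φ (M.orthogonalProjectionOnto z)
    rw [Submodule.orthogonalProjectionOnto_mem_subspace_eq_self]

lemma ando_halmos (c c' : H →ₗ[ℂ] Z) (h : ∀ x, ‖c x‖ = ‖c' x‖) :
    ∃ G : WithLp 2 (Z × Z) ≃ₗᵢ[ℂ] WithLp 2 (Z × Z),
      ∀ x, G (WithLp.toLp 2 (c x, 0)) = WithLp.toLp 2 (c' x, 0) := by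
  obtain ⟨p, h1, h2, h3⟩ := ando_partial c c' h
  set q := p.adjoint with hq
  have hpq : ∀ x y, ⟪p x, y⟫_ℂ = ⟪x, q y⟫_ℂ := fun x y =>
    (ContinuousLinearMap.adjoint_inner_right p x y).symm
  have hqp : ∀ x y, ⟪q x, y⟫_ℂ = ⟪x, p y⟫_ℂ := fun x y =>
    (ContinuousLinearMap.adjoint_inner_left p y x)
  have h4 : ∀ z, q (p (q z)) = q z := by
    intro z
    refine ext_inner_right ℂ fun w => ?_
    rw [hqp, hpq, hqp, h3, ← hqp]
  let f : (WithLp 2 (Z × Z)) →ₗ[ℂ] WithLp 2 (Z × Z) :=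
    { toFun := fun v => WithLp.toLp 2 (p v.fst + (v.snd - p (q v.snd)), (v.fst - q (p v.fst)) + q v.snd)
      map_add' := fun v w => by
        apply ando_prod_ext <;> simp <;> abel
      map_smul' := fun a v => by
        apply ando_prod_ext <;> simp [smul_sub] }
  let g : (WithLp 2 (Z × Z)) →ₗ[ℂ] WithLp 2 (Z × Z) :=
    { toFun := fun v => WithLp.toLp 2 (q v.fst + (v.snd - q (p v.snd)), (v.fst - p (q v.fst)) + p v.snd)
      map_add' := fun v w => by
        apply ando_prod_ext <;> simp <;> abel
      map_smul' := fun a v => by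
        apply ando_prod_ext <;> simp [smul_sub] }
  have hfg : f ∘ₗ g = LinearMap.id := by
    refine LinearMap.ext fun v => ?_
    apply ando_prod_ext <;> simp [f, g, h3, h4]
  have hgf : g ∘ₗ f = LinearMap.id := by
    refine LinearMap.ext fun v => ?_
    apply ando_prod_ext <;> simp [f, g, h3, h4]
  have hadj : ∀ v w, ⟪f v, w⟫_ℂ = ⟪v, g w⟫_ℂ := by
    intro v w
    simp only [ando_prod_inner, f, g, LinearMap.coe_mk, AddHom.coe_mk, WithLp.toLp_fst, WithLp.toLp_snd, inner_add_left,
      inner_sub_left, inner_add_right, inner_sub_right, hpq, hqp]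
    ring
  refine ⟨⟨LinearEquiv.ofLinearMap f g hfg hgf, fun v => ?_⟩, fun x => ?_⟩
  · change ‖f v‖ = ‖v‖
    rw [norm_eq_sqrt_re_inner (𝕜 := ℂ), hadj, norm_eq_sqrt_re_inner (𝕜 := ℂ)]
    congr 3
    exact LinearMap.congr_fun hgf v
  · change f _ = _
    have h5 := h2 x
    rw [h1] at h5
    simp [f, h1, h5]
end Halmos
set_option linter.unusedSectionVars false

section Seq
variable {E F : Type u} [NormedAddCommGroup E] [InnerProductSpace ℂ E]
  [NormedAddCommGroup F] [InnerProductSpace ℂ F]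

lemma ando_l2_hasSum (f : lp (fun _ : ℕ => F) 2) : HasSum (fun n => ‖f n‖ ^ 2) (‖f‖ ^ 2) := by
  have := lp.hasSum_norm (p := 2) (by norm_num) f
  simpa using this

lemma ando_memlp (x : ℕ → F) (hx : Summable fun n => ‖x n‖ ^ 2) : Memℓp x 2 := by
  refine memℓp_gen ?_
  simpa using hx

/-- An isometry into `ℓ²` from coordinates. -/
noncomputable def andoSeqMap (φ : E →ₗ[ℂ] (ℕ → F))
    (hφ : ∀ x, HasSum (fun n => ‖φ x n‖ ^ 2) (‖x‖ ^ 2)) : E →ₗᵢ[ℂ] lp (fun _ : ℕ => F) 2 where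
  toFun x := ⟨φ x, ando_memlp _ (hφ x).summable⟩
  map_add' x y := Subtype.ext (map_add φ x y)
  map_smul' c x := Subtype.ext (map_smul φ c x)
  norm_map' x := by
    have h := (ando_l2_hasSum (⟨φ x, ando_memlp _ (hφ x).summable⟩ :
      lp (fun _ : ℕ => F) 2)).unique (hφ x)
    exact (sq_eq_sq₀ (norm_nonneg _) (norm_nonneg _)).1 h

lemma andoSeqMap_apply (φ : E →ₗ[ℂ] (ℕ → F)) (hφ) (x : E) (n : ℕ) :
    andoSeqMap φ hφ x n = φ x n := rfl

/-- Coordinates of the half shift. -/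
noncomputable def andoTau (α β : F →ₗ[ℂ] F) (f : ℕ → F) : ℕ → F
  | 0 => β (f 0)
  | n + 1 => α (f n) + β (f (n + 1))

theorem ando_model (α β : F →ₗ[ℂ] F) (hn : ∀ x, ‖α x‖ ^ 2 + ‖β x‖ ^ 2 = ‖x‖ ^ 2)
    (ho : ∀ x y, ⟪α x, β y⟫_ℂ = 0) (hα : ∀ x, α (α x) = 0) (hβ : ∀ x, β (β x) = 0)
    (hαβ : ∀ x, α (β x) + β (α x) = x) (G₀ : F ≃ₗᵢ[ℂ] F) :
    ∃ (L : Type u) (_ : NormedAddCommGroup L) (_ : InnerProductSpace ℂ L)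
      (τ : L →ₗᵢ[ℂ] L) (i : F →ₗᵢ[ℂ] L) (G : L ≃ₗᵢ[ℂ] L),
      (∀ x, (∀ y, ⟪x, β y⟫_ℂ = 0) → ∀ l, ⟪i x, τ l⟫_ℂ = 0) ∧
      (∀ x, α x = 0 → τ (i x) = i (β x)) ∧ (∀ x, G (i x) = i (G₀ x)) ∧
      (∀ l, G (τ (τ l)) = τ (τ (G l))) := by
  let L := lp (fun _ : ℕ => F) 2
  have hadd : ∀ (f g : L) n, (f + g) n = f n + g n := fun f g n => rfl
  have hsmul : ∀ (c : ℂ) (f : L) n, (c • f) n = c • f n := fun c f n => rfl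
  let φτ : L →ₗ[ℂ] (ℕ → F) :=
    { toFun := fun f => andoTau α β f
      map_add' := fun f g => by
        funext n
        cases n with
        | zero => simp [andoTau]
        | succ n =>
          simp [andoTau]
          abel
      map_smul' := fun c f => by
        funext n
        cases n <;> simp [andoTau, hsmul] }
  have hτ : ∀ f : L, HasSum (fun n => ‖φτ f n‖ ^ 2) (‖f‖ ^ 2) := by
    intro f
    have hf := ando_l2_hasSum f
    have sα : Summable fun n => ‖α (f n)‖ ^ 2 :=
      Summable.of_nonneg_of_le (fun _ => by positivity)
        (fun n => by nlinarith [hn (f n), sq_nonneg ‖β (f n)‖]) hf.summable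
    have sβ : Summable fun n => ‖β (f n)‖ ^ 2 :=
      Summable.of_nonneg_of_le (fun _ => by positivity)
        (fun n => by nlinarith [hn (f n), sq_nonneg ‖α (f n)‖]) hf.summable
    obtain ⟨a, ha⟩ := sα
    obtain ⟨b, hb⟩ := sβ
    have hab : a + b = ‖f‖ ^ 2 := by
      refine (ha.add hb).unique ?_
      simpa only [hn] using hf
    have hb' := (hasSum_nat_add_iff' 1).2 hb
    rw [← hasSum_nat_add_iff' 1]
    have h1 := ha.add hb'
    have h2 : ∀ n, ‖φτ f (n + 1)‖ ^ 2 = ‖α (f n)‖ ^ 2 + ‖β (f (n + 1))‖ ^ 2 := by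
      intro n
      change ‖α (f n) + β (f (n + 1))‖ ^ 2 = _
      have := norm_add_sq_eq_norm_sq_add_norm_sq_of_inner_eq_zero (𝕜 := ℂ)
        (α (f n)) (β (f (n + 1))) (ho _ _)
      simpa [sq] using this
    have h3 : ‖φτ f 0‖ ^ 2 = ‖β (f 0)‖ ^ 2 := rfl
    simp only [h2]
    rw [← hab, Finset.sum_range_one, h3]
    rw [Finset.sum_range_one, ← add_sub_assoc] at h1
    exact h1
  let φi : F →ₗ[ℂ] (ℕ → F) := LinearMap.single ℂ (fun _ : ℕ => F) 0
  have hi : ∀ x, HasSum (fun n => ‖φi x n‖ ^ 2) (‖x‖ ^ 2) := by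
    intro x
    have := hasSum_single (f := fun n => ‖φi x n‖ ^ 2) 0 (fun n hn => by simp [φi, hn])
    simpa [φi] using this
  let φg : (F ≃ₗᵢ[ℂ] F) → L →ₗ[ℂ] (ℕ → F) := fun g =>
    { toFun := fun f n => g (f n)
      map_add' := fun f h => by
        funext n
        rw [hadd, map_add]
        rfl
      map_smul' := fun c f => by
        funext n
        rw [hsmul, map_smul]
        rfl }
  have hg : ∀ (g : F ≃ₗᵢ[ℂ] F) (f : L), HasSum (fun n => ‖φg g f n‖ ^ 2) (‖f‖ ^ 2) := by
    intro g f
    simpa [φg] using ando_l2_hasSum f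
  let τ := andoSeqMap φτ hτ
  let i := andoSeqMap φi hi
  let Gf := fun g : F ≃ₗᵢ[ℂ] F => andoSeqMap _ (hg g)
  have hGf : ∀ g f n, Gf g f n = g (f n) := fun g f n => rfl
  have hs : Function.Surjective (Gf G₀) := fun f => ⟨Gf G₀.symm f, by
    ext n
    simp [hGf]⟩
  let G : L ≃ₗᵢ[ℂ] L := LinearIsometryEquiv.ofSurjective (Gf G₀) hs
  have hG : ∀ (f : L) n, G f n = G₀ (f n) := fun f n => rfl
  have hτ0 : ∀ f : L, τ f 0 = β (f 0) := fun f => rfl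
  have hτs : ∀ (f : L) n, τ f (n + 1) = α (f n) + β (f (n + 1)) := fun f n => rfl
  have hi0 : ∀ x, i x 0 = x := fun x => by simp [i, andoSeqMap_apply, φi]
  have his : ∀ x n, i x (n + 1) = 0 := fun x n => by simp [i, andoSeqMap_apply, φi]
  have hττ0 : ∀ f : L, τ (τ f) 0 = 0 := fun f => by rw [hτ0, hτ0, hβ]
  have hττs : ∀ (f : L) n, τ (τ f) (n + 1) = f n := fun f n => by
    rw [hτs, hτs, map_add, hβ, add_zero]
    cases n with
    | zero => rw [hτ0, hαβ]
    | succ n => rw [hτs, map_add, hα, zero_add, hαβ]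
  refine ⟨L, inferInstance, inferInstance, τ, i, G, ?_, ?_, ?_, ?_⟩
  · intro x hx l
    rw [lp.inner_eq_tsum]
    convert tsum_zero with n
    cases n with
    | zero => rw [hi0, hτ0, hx]
    | succ n => rw [his, inner_zero_left]
  · intro x hx
    ext n
    rcases n with _ | _ | n
    · rw [hτ0, hi0, hi0]
    · rw [hτs, his, his, hi0, hx, map_zero, add_zero]
    · rw [hτs, his, his, his, map_zero, map_zero, add_zero]
  · intro x
    ext n
    cases n with
    | zero => rw [hG, hi0, hi0]
    | succ n => rw [hG, his, his, map_zero]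
  · intro l
    ext n
    cases n with
    | zero => rw [hG, hττ0, hττ0, map_zero]
    | succ n => rw [hG, hττs, hττs, hG]
end Seq

section DirectLimit
open Filter
variable {K : Type u} [NormedAddCommGroup K] [InnerProductSpace ℂ K]

/-- Sequences that eventually satisfy `x (n+1) = V (x n)`. -/
def AndoEvSeq (V : K →ₗᵢ[ℂ] K) : Submodule ℂ (ℕ → K) where
  carrier := {x | ∀ᶠ n in atTop, x (n + 1) = V (x n)}
  add_mem' := by
    intro x y hx hy
    filter_upwards [hx, hy] with n h1 h2
    simp [h1, h2]
  zero_mem' := by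
    refine Filter.Eventually.of_forall fun n => ?_
    simp
  smul_mem' := by
    intro c x hx
    filter_upwards [hx] with n h1
    simp [h1]

/-- Type synonym without topology. -/
def AndoEv (V : K →ₗᵢ[ℂ] K) : Type u := AndoEvSeq V

noncomputable instance (V : K →ₗᵢ[ℂ] K) : AddCommGroup (AndoEv V) :=
  inferInstanceAs (AddCommGroup (AndoEvSeq V))

noncomputable instance (V : K →ₗᵢ[ℂ] K) : Module ℂ (AndoEv V) :=
  inferInstanceAs (Module ℂ (AndoEvSeq V))

/-- The underlying sequence. -/
def AndoEv.seq {V : K →ₗᵢ[ℂ] K} : AndoEv V →ₗ[ℂ] (ℕ → K) := (AndoEvSeq V).subtype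

/-- Constructor. -/
def AndoEv.mk {V : K →ₗᵢ[ℂ] K} (x : ℕ → K) (hx : ∀ᶠ n in atTop, x (n + 1) = V (x n)) :
    AndoEv V := (⟨x, hx⟩ : AndoEvSeq V)

lemma AndoEv.seq_mk {V : K →ₗᵢ[ℂ] K} (x : ℕ → K) (hx) : (AndoEv.mk (V := V) x hx).seq = x := rfl

lemma AndoEv.ext {V : K →ₗᵢ[ℂ] K} {x y : AndoEv V} (h : ∀ n, x.seq n = y.seq n) : x = y :=
  Subtype.ext (funext h)

lemma AndoEv.prop {V : K →ₗᵢ[ℂ] K} (x : AndoEv V) :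
    ∀ᶠ n in atTop, x.seq (n + 1) = V (x.seq n) := x.2

lemma AndoEv.exists_inner {V : K →ₗᵢ[ℂ] K} (x y : AndoEv V) :
    ∃ c : ℂ, ∀ᶠ n in atTop, ⟪x.seq n, y.seq n⟫_ℂ = c := by
  obtain ⟨N, hN⟩ := eventually_atTop.1 (x.prop.and y.prop)
  refine ⟨⟪x.seq N, y.seq N⟫_ℂ, eventually_atTop.2 ⟨N, fun n hn => ?_⟩⟩
  induction n, hn using Nat.le_induction with
  | base => rfl
  | succ n hn ih =>
    rw [(hN n hn).1, (hN n hn).2, V.inner_map_map, ih]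

/-- Limit inner product. -/
noncomputable def AndoEv.inn {V : K →ₗᵢ[ℂ] K} (x y : AndoEv V) : ℂ :=
  Classical.choose (AndoEv.exists_inner x y)

lemma AndoEv.inn_spec {V : K →ₗᵢ[ℂ] K} (x y : AndoEv V) :
    ∀ᶠ n in atTop, ⟪x.seq n, y.seq n⟫_ℂ = AndoEv.inn x y :=
  Classical.choose_spec (AndoEv.exists_inner x y)

/-- The pre-inner product. -/
@[reducible] noncomputable def AndoEv.core (V : K →ₗᵢ[ℂ] K) :
    PreInnerProductSpace.Core ℂ (AndoEv V) where
  inner := AndoEv.inn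
  conj_inner_symm x y := by
    obtain ⟨n, h1, h2⟩ := ((AndoEv.inn_spec x y).and (AndoEv.inn_spec y x)).exists
    rw [← h1, ← h2, inner_conj_symm]
  re_inner_nonneg x := by
    obtain ⟨n, h1⟩ := (AndoEv.inn_spec x x).exists
    rw [← h1]
    exact inner_self_nonneg
  add_left x y z := by
    obtain ⟨n, h1, h2, h3⟩ := ((AndoEv.inn_spec (x + y) z).and
      ((AndoEv.inn_spec x z).and (AndoEv.inn_spec y z))).exists
    rw [← h1, ← h2, ← h3, map_add, Pi.add_apply, inner_add_left]
  smul_left x y r := by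
    obtain ⟨n, h1, h2⟩ := ((AndoEv.inn_spec (r • x) y).and (AndoEv.inn_spec x y)).exists
    rw [← h1, ← h2, map_smul, Pi.smul_apply, inner_smul_left]

noncomputable instance (V : K →ₗᵢ[ℂ] K) : SeminormedAddCommGroup (AndoEv V) :=
  @InnerProductSpace.Core.toSeminormedAddCommGroup ℂ _ _ _ _ (AndoEv.core V)

noncomputable instance (V : K →ₗᵢ[ℂ] K) : InnerProductSpace ℂ (AndoEv V) :=
  InnerProductSpace.ofCore (AndoEv.core V)

lemma AndoEv.inner_spec {V : K →ₗᵢ[ℂ] K} (x y : AndoEv V) :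
    ∀ᶠ n in atTop, ⟪x.seq n, y.seq n⟫_ℂ = ⟪x, y⟫_ℂ := AndoEv.inn_spec x y

lemma AndoEv.norm_spec {V : K →ₗᵢ[ℂ] K} (x : AndoEv V) :
    ∀ᶠ n in atTop, ‖x.seq n‖ = ‖x‖ := by
  filter_upwards [x.inner_spec x] with n hn
  rw [norm_eq_sqrt_re_inner (𝕜 := ℂ), hn, ← norm_eq_sqrt_re_inner]

/-- Pointwise action of an isometry commuting with `V`. -/
noncomputable def AndoEv.act (V W : K →ₗᵢ[ℂ] K) (h : ∀ x, W (V x) = V (W x)) :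
    AndoEv V →ₗᵢ[ℂ] AndoEv V where
  toFun x := AndoEv.mk (fun n => W (x.seq n)) (by
    filter_upwards [x.prop] with n hn
    rw [hn, h])
  map_add' x y := AndoEv.ext fun n => by
    simp [AndoEv.seq_mk]
    rfl
  map_smul' c x := AndoEv.ext fun n => by
    simp [AndoEv.seq_mk]
    rfl
  norm_map' x := by
    obtain ⟨n, h1, h2⟩ := ((AndoEv.norm_spec x).and (AndoEv.norm_spec (AndoEv.mk (V := V)
      (fun n => W (x.seq n)) (by
        filter_upwards [x.prop] with n hn
        rw [hn, h])))).exists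
    exact h2.symm.trans ((W.norm_map _).trans h1)

/-- Embedding. -/
noncomputable def AndoEv.emb (V : K →ₗᵢ[ℂ] K) : K →ₗᵢ[ℂ] AndoEv V where
  toFun x := AndoEv.mk (fun n => (V ^ n) x) (Eventually.of_forall fun n => by
    simp [pow_succ'])
  map_add' x y := AndoEv.ext fun n => by simp [AndoEv.seq_mk]
  map_smul' c x := AndoEv.ext fun n => by simp [AndoEv.seq_mk]
  norm_map' x := by
    obtain ⟨n, h2⟩ := (AndoEv.norm_spec (AndoEv.mk (V := V)
      (fun n => (V ^ n) x) (Eventually.of_forall fun n => by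
    simp [pow_succ']))).exists
    exact h2.symm.trans ((V ^ n).norm_map x)

/-- Right shift: an inverse of `V` up to null vectors. -/
lemma AndoEv.exists_preimage {V : K →ₗᵢ[ℂ] K} (x : AndoEv V) :
    ∃ y : AndoEv V, ‖AndoEv.act V V (fun _ => rfl) y - x‖ = 0 := by
  obtain ⟨N, hN⟩ := eventually_atTop.1 x.prop
  refine ⟨AndoEv.mk (fun n => x.seq (n - 1)) (eventually_atTop.2 ⟨N + 1, fun n hn => ?_⟩), ?_⟩
  · obtain ⟨m, rfl⟩ : ∃ m, n = m + 1 := ⟨n - 1, by omega⟩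
    simpa using hN m (by omega)
  · obtain ⟨n, h1, h2⟩ := ((AndoEv.norm_spec (AndoEv.act V V (fun _ => rfl) (AndoEv.mk
      (fun n => x.seq (n - 1)) (eventually_atTop.2 ⟨N + 1, fun n hn => by
        obtain ⟨m, rfl⟩ : ∃ m, n = m + 1 := ⟨n - 1, by omega⟩
        simpa using hN m (by omega)⟩)) - x)).and (eventually_ge_atTop (N + 1))).exists
    rw [← h1, norm_eq_zero, map_sub, Pi.sub_apply, sub_eq_zero]
    obtain ⟨m, rfl⟩ : ∃ m, n = m + 1 := ⟨n - 1, by omega⟩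
    exact (hN m (by omega)).symm

/-- Extension of a linear isometry to the completion. -/
noncomputable def andoCompl {E : Type u} [SeminormedAddCommGroup E] [InnerProductSpace ℂ E]
    (W : E →ₗᵢ[ℂ] E) : UniformSpace.Completion E →ₗᵢ[ℂ] UniformSpace.Completion E where
  toLinearMap := (W.toContinuousLinearMap.completion).toLinearMap
  norm_map' x := by
    induction x using UniformSpace.Completion.induction_on with
    | hp => exact isClosed_eq (W.toContinuousLinearMap.completion.continuous.norm) continuous_norm
    | ih a =>
      change ‖W.toContinuousLinearMap.completion (a : UniformSpace.Completion E)‖ = _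
      rw [ContinuousLinearMap.completion_apply_coe]
      simp

lemma andoCompl_coe {E : Type u} [SeminormedAddCommGroup E] [InnerProductSpace ℂ E]
    (W : E →ₗᵢ[ℂ] E) (a : E) :
    andoCompl W (a : UniformSpace.Completion E) = (W a : E) :=
  ContinuousLinearMap.completion_apply_coe _ _

lemma andoCompl_comm {E : Type u} [SeminormedAddCommGroup E] [InnerProductSpace ℂ E]
    (W₁ W₂ W₃ : E →ₗᵢ[ℂ] E) (h : ∀ x, W₁ (W₂ x) = W₃ x) (x : UniformSpace.Completion E) :
    andoCompl W₁ (andoCompl W₂ x) = andoCompl W₃ x := by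
  induction x using UniformSpace.Completion.induction_on with
  | hp => exact isClosed_eq ((andoCompl W₁).continuous.comp (andoCompl W₂).continuous)
            (andoCompl W₃).continuous
  | ih a => simp [andoCompl_coe, h]

theorem ando_unitary_extension (V₁ V₂ : K →ₗᵢ[ℂ] K) (h : ∀ x, V₁ (V₂ x) = V₂ (V₁ x)) :
    ∃ (L : Type u) (_ : NormedAddCommGroup L) (_ : InnerProductSpace ℂ L) (_ : CompleteSpace L)
      (ι : K →ₗᵢ[ℂ] L) (U₁ U₂ : L ≃ₗᵢ[ℂ] L), (∀ x, U₁ (U₂ x) = U₂ (U₁ x)) ∧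
      (∀ x, ι (V₁ x) = U₁ (ι x)) ∧ (∀ x, ι (V₂ x) = U₂ (ι x)) := by
  let V := V₁.comp V₂
  let W₁ := AndoEv.act V V₁ (fun x => by simp [V, h])
  let W₂ := AndoEv.act V V₂ (fun x => by simp [V, h])
  let W := AndoEv.act V V (fun x => rfl)
  have h12 : ∀ x, W₁ (W₂ x) = W x := fun x => AndoEv.ext fun n => rfl
  have h21 : ∀ x, W₂ (W₁ x) = W x := fun x => AndoEv.ext fun n => (h _).symm
  have c12 := andoCompl_comm _ _ _ h12
  have c21 := andoCompl_comm _ _ _ h21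
  have hs : Function.Surjective (andoCompl W) := by
    have hc : IsClosed (Set.range (andoCompl W)) :=
      (andoCompl W).isometry.isClosedEmbedding.isClosed_range
    have hd : ∀ a : AndoEv V, (a : UniformSpace.Completion (AndoEv V)) ∈ Set.range (andoCompl W) := by
      intro a
      obtain ⟨y, hy⟩ := AndoEv.exists_preimage a
      refine ⟨y, ?_⟩
      rw [andoCompl_coe, ← sub_eq_zero, ← UniformSpace.Completion.coe_sub, ← norm_eq_zero,
        UniformSpace.Completion.norm_coe]
      exact hy
    intro x
    induction x using UniformSpace.Completion.induction_on with
    | hp => exact hc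
    | ih a => exact hd a
  have s1 : Function.Surjective (andoCompl W₁) := fun x => by
    obtain ⟨y, hy⟩ := hs x
    exact ⟨andoCompl W₂ y, by rw [c12, hy]⟩
  have s2 : Function.Surjective (andoCompl W₂) := fun x => by
    obtain ⟨y, hy⟩ := hs x
    exact ⟨andoCompl W₁ y, by rw [c21, hy]⟩
  have e : ∀ (T : K →ₗᵢ[ℂ] K) (hT : ∀ x, T (V x) = V (T x)) (x : K),
      AndoEv.emb V (T x) = AndoEv.act V T hT (AndoEv.emb V x) := by
    intro T hT x
    refine AndoEv.ext fun n => ?_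
    change (V ^ n) (T x) = T ((V ^ n) x)
    induction n with
    | zero => rfl
    | succ n ih =>
      rw [pow_succ']
      change V ((V ^ n) (T x)) = T (V ((V ^ n) x))
      rw [ih, hT]
  refine ⟨UniformSpace.Completion (AndoEv V), inferInstance, inferInstance, inferInstance,
    UniformSpace.Completion.toComplₗᵢ.comp (AndoEv.emb V),
    LinearIsometryEquiv.ofSurjective _ s1, LinearIsometryEquiv.ofSurjective _ s2, ?_, ?_, ?_⟩
  · intro x
    change andoCompl W₁ (andoCompl W₂ x) = andoCompl W₂ (andoCompl W₁ x)
    rw [c12, c21]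
  · intro x
    change ((AndoEv.emb V (V₁ x) : AndoEv V) : UniformSpace.Completion (AndoEv V)) =
      andoCompl W₁ ((AndoEv.emb V x : AndoEv V) : UniformSpace.Completion (AndoEv V))
    rw [andoCompl_coe, e]
  · intro x
    change ((AndoEv.emb V (V₂ x) : AndoEv V) : UniformSpace.Completion (AndoEv V)) =
      andoCompl W₂ ((AndoEv.emb V x : AndoEv V) : UniformSpace.Completion (AndoEv V))
    rw [andoCompl_coe, e]

end DirectLimit

section Assembly
variable {H : Type u} [NormedAddCommGroup H] [InnerProductSpace ℂ H] [CompleteSpace H]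

/-- The one-operator isometric dilation with a prescribed shift. -/
lemma ando_W {L : Type u} [NormedAddCommGroup L] [InnerProductSpace ℂ L]
    (T D : H →L[ℂ] H) (hD : ∀ x, ‖D x‖ ^ 2 = ‖x‖ ^ 2 - ‖T x‖ ^ 2) (τ : L →ₗᵢ[ℂ] L)
    (i : H →ₗᵢ[ℂ] L) (ho : ∀ x l, ⟪i x, τ l⟫_ℂ = 0) :
    ∃ W : WithLp 2 (H × L) →ₗᵢ[ℂ] WithLp 2 (H × L),
      ∀ v, W v = WithLp.toLp 2 (T v.fst, i (D v.fst) + τ v.snd) := by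
  refine ⟨⟨{ toFun := fun v => WithLp.toLp 2 (T v.fst, i (D v.fst) + τ v.snd)
             map_add' := fun v w => ?_
             map_smul' := fun a v => ?_ }, fun v => ?_⟩, fun v => rfl⟩
  · apply ando_prod_ext <;> simp
    abel
  · apply ando_prod_ext <;> simp
  · refine (sq_eq_sq₀ (norm_nonneg _) (norm_nonneg _)).1 ?_
    change ‖WithLp.toLp 2 (T v.fst, i (D v.fst) + τ v.snd)‖ ^ 2 = _
    rw [WithLp.prod_norm_sq_eq_of_L2 (WithLp.toLp 2 (T v.fst, i (D v.fst) + τ v.snd)),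
      WithLp.prod_norm_sq_eq_of_L2 v]
    change ‖T v.fst‖ ^ 2 + ‖i (D v.fst) + τ v.snd‖ ^ 2 = ‖v.fst‖ ^ 2 + ‖v.snd‖ ^ 2
    have h1 := norm_add_sq_eq_norm_sq_add_norm_sq_of_inner_eq_zero (𝕜 := ℂ)
      (i (D v.fst)) (τ v.snd) (ho _ _)
    have h2 := hD v.fst
    simp only [← sq, LinearIsometry.norm_map] at h1
    rw [h1, h2]
    ring

/-- Data on the fibre space. -/
lemma ando_fibre (A B DA DB : H →L[ℂ] H) (hDA : ∀ x, ‖DA x‖ ^ 2 = ‖x‖ ^ 2 - ‖A x‖ ^ 2)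
    (hDB : ∀ x, ‖DB x‖ ^ 2 = ‖x‖ ^ 2 - ‖B x‖ ^ 2) (hAB : ∀ x, A (B x) = B (A x)) :
    ∃ (F : Type u) (_ : NormedAddCommGroup F) (_ : InnerProductSpace ℂ F)
      (α β : F →ₗ[ℂ] F) (G₀ : F ≃ₗᵢ[ℂ] F) (j : H →ₗᵢ[ℂ] F),
      (∀ x, ‖α x‖ ^ 2 + ‖β x‖ ^ 2 = ‖x‖ ^ 2) ∧ (∀ x y, ⟪α x, β y⟫_ℂ = 0) ∧
      (∀ x, α (α x) = 0) ∧ (∀ x, β (β x) = 0) ∧ (∀ x, α (β x) + β (α x) = x) ∧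
      (∀ x y, ⟪j x, β y⟫_ℂ = 0) ∧ (∀ x, α (j x) = 0) ∧
      (∀ x, G₀ (j (DA (B x)) + β (j (DB x))) = j (DB (A x)) + β (j (DA x))) := by
  let c : (H →L[ℂ] H) → (H →L[ℂ] H) → H →ₗ[ℂ] WithLp 2 (H × H) := fun S T =>
    { toFun := fun x => WithLp.toLp 2 (S x, T x)
      map_add' := fun x y => by apply ando_prod_ext <;> simp
      map_smul' := fun a x => by apply ando_prod_ext <;> simp }
  have hc : ∀ S T x, ‖c S T x‖ ^ 2 = ‖S x‖ ^ 2 + ‖T x‖ ^ 2 := fun S T x =>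
    WithLp.prod_norm_sq_eq_of_L2 _
  obtain ⟨G, hG⟩ := ando_halmos (c (DA * B) DB) (c (DB * A) DA) (fun x => by
    refine (sq_eq_sq₀ (norm_nonneg _) (norm_nonneg _)).1 ?_
    rw [hc, hc, mul_apply_eq_comp, mul_apply_eq_comp, hDA, hDB, hDA, hDB, hAB]
    ring)
  let α : WithLp 2 (WithLp 2 (H × H) × WithLp 2 (H × H)) →ₗ[ℂ] WithLp 2 (WithLp 2 (H × H) × WithLp 2 (H × H)) :=
    { toFun := fun v => WithLp.toLp 2 (WithLp.toLp 2 (v.fst.snd, 0), WithLp.toLp 2 (v.snd.snd, 0))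
      map_add' := fun x y => by
        apply ando_prod_ext <;> apply ando_prod_ext <;> simp
      map_smul' := fun a x => by
        apply ando_prod_ext <;> apply ando_prod_ext <;> simp }
  let β : WithLp 2 (WithLp 2 (H × H) × WithLp 2 (H × H)) →ₗ[ℂ] WithLp 2 (WithLp 2 (H × H) × WithLp 2 (H × H)) :=
    { toFun := fun v => WithLp.toLp 2 (WithLp.toLp 2 (0, v.fst.fst), WithLp.toLp 2 (0, v.snd.fst))
      map_add' := fun x y => by
        apply ando_prod_ext <;> apply ando_prod_ext <;> simp
      map_smul' := fun a x => by
        apply ando_prod_ext <;> apply ando_prod_ext <;> simp }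
  have hα : ∀ v, α v =
    WithLp.toLp 2 (WithLp.toLp 2 (v.fst.snd, 0), WithLp.toLp 2 (v.snd.snd, 0)) := fun v => rfl
  have hβ : ∀ v, β v =
    WithLp.toLp 2 (WithLp.toLp 2 (0, v.fst.fst), WithLp.toLp 2 (0, v.snd.fst)) := fun v => rfl
  have hnF : ∀ v : WithLp 2 (WithLp 2 (H × H) × WithLp 2 (H × H)), ‖v‖ ^ 2 =
      ‖v.fst.fst‖ ^ 2 + ‖v.fst.snd‖ ^ 2 + (‖v.snd.fst‖ ^ 2 + ‖v.snd.snd‖ ^ 2) := fun v => by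
    rw [WithLp.prod_norm_sq_eq_of_L2, WithLp.prod_norm_sq_eq_of_L2 v.fst,
      WithLp.prod_norm_sq_eq_of_L2 v.snd]
  have hiF : ∀ v w : WithLp 2 (WithLp 2 (H × H) × WithLp 2 (H × H)), ⟪v, w⟫_ℂ = ⟪v.fst.fst, w.fst.fst⟫_ℂ + ⟪v.fst.snd, w.fst.snd⟫_ℂ +
      (⟪v.snd.fst, w.snd.fst⟫_ℂ + ⟪v.snd.snd, w.snd.snd⟫_ℂ) := fun v w => by
    rw [ando_prod_inner, ando_prod_inner v.fst, ando_prod_inner v.snd]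
  let j : H →ₗᵢ[ℂ] WithLp 2 (WithLp 2 (H × H) × WithLp 2 (H × H)) :=
    { toFun := fun x => WithLp.toLp 2 (WithLp.toLp 2 (x, 0), 0)
      map_add' := fun x y => by
        apply ando_prod_ext <;> apply ando_prod_ext <;> simp
      map_smul' := fun a x => by
        apply ando_prod_ext <;> apply ando_prod_ext <;> simp
      norm_map' := fun x => by
        refine (sq_eq_sq₀ (norm_nonneg _) (norm_nonneg _)).1 ?_
        rw [hnF]
        simp }
  have hj : ∀ x, j x = WithLp.toLp 2 (WithLp.toLp 2 (x, 0), 0) := fun x => rfl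
  have hjj : ∀ x y, j x + β (j y) = WithLp.toLp 2 (WithLp.toLp 2 (x, y), 0) := fun x y => by
    rw [hβ, hj, hj]
    apply ando_prod_ext <;> apply ando_prod_ext <;> simp
  refine ⟨WithLp 2 (WithLp 2 (H × H) × WithLp 2 (H × H)), inferInstance, inferInstance, α, β, G, j, ?_, ?_, ?_, ?_, ?_, ?_, ?_, ?_⟩
  · intro x
    rw [hnF, hnF, hnF x, hα, hβ]
    simp
    ring
  · intro x y
    rw [hiF, hα, hβ]
    simp
  · intro x
    rw [hα, hα]
    apply ando_prod_ext <;> apply ando_prod_ext <;> simp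
  · intro x
    rw [hβ, hβ]
    apply ando_prod_ext <;> apply ando_prod_ext <;> simp
  · intro x
    rw [hα (β x), hβ (α x), hα, hβ]
    apply ando_prod_ext <;> apply ando_prod_ext <;> simp
  · intro x y
    rw [hiF, hj, hβ]
    simp
  · intro x
    rw [hα, hj]
    apply ando_prod_ext <;> apply ando_prod_ext <;> simp
  · intro x
    rw [hjj, hjj]
    exact hG x

theorem ando_isometric (A B : H →L[ℂ] H) (hA : ‖A‖ ≤ 1) (hB : ‖B‖ ≤ 1) (hAB : Commute A B) :
    ∃ (K : Type u) (_ : NormedAddCommGroup K) (_ : InnerProductSpace ℂ K)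
      (ι : H →ₗᵢ[ℂ] K) (V₁ V₂ : K →ₗᵢ[ℂ] K) (P : K → H), (∀ x, V₁ (V₂ x) = V₂ (V₁ x)) ∧
      (∀ k, P (V₁ k) = A (P k)) ∧ (∀ k, P (V₂ k) = B (P k)) ∧ (∀ x, P (ι x) = x) ∧
      (∀ k y, ⟪k, ι y⟫_ℂ = ⟪P k, y⟫_ℂ) := by
  have hAB' : ∀ x, A (B x) = B (A x) := fun x => congrArg (fun T : H →L[ℂ] H => T x) hAB.eq
  obtain ⟨DA, hDA⟩ := ando_defect A hA
  obtain ⟨DB, hDB⟩ := ando_defect B hB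
  obtain ⟨F, _, _, α, β, G₀, j, f1, f2, f3, f4, f5, f6, f7, f8⟩ :=
    ando_fibre A B DA DB hDA hDB hAB'
  obtain ⟨L, _, _, τ, i, G, g1, g2, g3, g4⟩ := ando_model α β f1 f2 f3 f4 f5 G₀
  have ho : ∀ x l, ⟪(i.comp j) x, τ l⟫_ℂ = 0 := fun x l => g1 (j x) (f6 x) l
  obtain ⟨W₁, hW₁⟩ := ando_W A DA hDA τ (i.comp j) ho
  obtain ⟨W₂, hW₂⟩ := ando_W B DB hDB τ (i.comp j) ho
  have hext : ∀ g : L ≃ₗᵢ[ℂ] L, ∃ Γ : WithLp 2 (H × L) →ₗᵢ[ℂ] WithLp 2 (H × L),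
      ∀ v, Γ v = WithLp.toLp 2 (v.fst, g v.snd) := by
    intro g
    refine ⟨⟨{ toFun := fun v => WithLp.toLp 2 (v.fst, g v.snd)
               map_add' := fun v w => ?_
               map_smul' := fun a v => ?_ }, fun v => ?_⟩, fun v => rfl⟩
    · apply ando_prod_ext <;> simp
    · apply ando_prod_ext <;> simp
    · refine (sq_eq_sq₀ (norm_nonneg _) (norm_nonneg _)).1 ?_
      change ‖WithLp.toLp 2 (v.fst, g v.snd)‖ ^ 2 = _
      rw [WithLp.prod_norm_sq_eq_of_L2, WithLp.prod_norm_sq_eq_of_L2 v]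
      simp
  obtain ⟨Γ, hΓ⟩ := hext G
  obtain ⟨Γ', hΓ'⟩ := hext G.symm
  let ι : H →ₗᵢ[ℂ] WithLp 2 (H × L) :=
    { toFun := fun x => WithLp.toLp 2 (x, 0)
      map_add' := fun x y => by apply ando_prod_ext <;> simp
      map_smul' := fun a x => by apply ando_prod_ext <;> simp
      norm_map' := fun x => by
        refine (sq_eq_sq₀ (norm_nonneg _) (norm_nonneg _)).1 ?_
        rw [WithLp.prod_norm_sq_eq_of_L2]
        simp }
  refine ⟨WithLp 2 (H × L), inferInstance, inferInstance, ι, Γ.comp W₁, W₂.comp Γ', WithLp.fst,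
    ?_, ?_, ?_, ?_, ?_⟩
  · intro v
    change Γ (W₁ (W₂ (Γ' v))) = W₂ (Γ' (Γ (W₁ v)))
    simp only [hΓ, hΓ', hW₁, hW₂, WithLp.toLp_fst, WithLp.toLp_snd,
      LinearIsometryEquiv.symm_apply_apply, map_add]
    rw [hAB', g4, LinearIsometryEquiv.apply_symm_apply, ← add_assoc, ← add_assoc]
    have hij : ∀ x, (i.comp j) x = i (j x) := fun x => rfl
    rw [hij, hij, hij, hij, g2 _ (f7 _), g2 _ (f7 _), g3, g3, ← map_add, ← map_add, ← map_add, f8]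
  · intro k
    simp [hΓ, hW₁]
  · intro k
    simp [hΓ', hW₂]
  · intro x
    rfl
  · intro k y
    rw [ando_prod_inner]
    simp [ι]

end Assembly

/-- Ando's dilation theorem: any two commuting contractions on a Hilbert space have
commuting unitary dilations. -/
theorem ando_dilation {H : Type u} [NormedAddCommGroup H] [InnerProductSpace ℂ H]
    [CompleteSpace H] (A B : H →L[ℂ] H) (hA : ‖A‖ ≤ 1) (hB : ‖B‖ ≤ 1) (hAB : Commute A B) :
    ∃ (K : Type u) (_ : NormedAddCommGroup K) (_ : InnerProductSpace ℂ K) (_ : CompleteSpace K)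
      (ι : H →ₗᵢ[ℂ] K) (U V : K →L[ℂ] K),
      U ∈ unitary (K →L[ℂ] K) ∧ V ∈ unitary (K →L[ℂ] K) ∧ Commute U V ∧
      ∀ (m n : ℕ) (x y : H),
        ⟪ι ((A ^ m * B ^ n) x), ι y⟫_ℂ = ⟪(U ^ m * V ^ n) (ι x), ι y⟫_ℂ := by
  obtain ⟨K₀, _, _, ι₀, V₁, V₂, P, hc, hP1, hP2, hPι, hPi⟩ := ando_isometric A B hA hB hAB
  obtain ⟨K, _, _, _, κ, U₁, U₂, hU, hκ1, hκ2⟩ := ando_unitary_extension V₁ V₂ hc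
  refine ⟨K, inferInstance, inferInstance, inferInstance, κ.comp ι₀, (U₁ : K →L[ℂ] K),
    (U₂ : K →L[ℂ] K), (Unitary.linearIsometryEquiv.symm U₁).2,
    (Unitary.linearIsometryEquiv.symm U₂).2, ContinuousLinearMap.ext hU, ?_⟩
  intro m n x y
  have h2 : ∀ n : ℕ, ∃ k, ((U₂ : K →L[ℂ] K) ^ n) (κ (ι₀ x)) = κ k ∧ P k = (B ^ n) x := by
    intro n
    induction n with
    | zero => exact ⟨ι₀ x, rfl, hPι x⟩
    | succ n ih =>
      obtain ⟨k, h1, h2⟩ := ih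
      refine ⟨V₂ k, ?_, ?_⟩
      · rw [pow_succ', mul_apply_eq_comp, h1, hκ2]
        rfl
      · rw [hP2, h2, pow_succ', mul_apply_eq_comp]
  obtain ⟨k₀, hk1, hk2⟩ := h2 n
  have h1 : ∀ m : ℕ, ∃ k, ((U₁ : K →L[ℂ] K) ^ m) (κ k₀) = κ k ∧ P k = (A ^ m) (P k₀) := by
    intro m
    induction m with
    | zero => exact ⟨k₀, rfl, rfl⟩
    | succ m ih =>
      obtain ⟨k, h1, h2⟩ := ih
      refine ⟨V₁ k, ?_, ?_⟩
      · rw [pow_succ', mul_apply_eq_comp, h1, hκ1]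
        rfl
      · rw [hP1, h2, pow_succ', mul_apply_eq_comp]
  obtain ⟨k, hk3, hk4⟩ := h1 m
  rw [mul_apply_eq_comp, mul_apply_eq_comp, LinearIsometry.inner_map_map]
  change _ = ⟪((U₁ : K →L[ℂ] K) ^ m) (((U₂ : K →L[ℂ] K) ^ n) (κ (ι₀ x))), κ (ι₀ y)⟫_ℂ
  rw [hk1, hk3, LinearIsometry.inner_map_map, hPi, hk4, hk2]
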